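/- arXiv:1412.6364 — 2 statements merged into one kernel-verified Lean document; each statement's English description precedes it below -/
import Mathlib

section
/- Let λ be an even partition of length r. For every fixed integer k, the real zeros of the exceptional Hermite polynomials of even degree satisfy the scaling limit lim_{n→∞} 2√n · x_{k+n+1−|λ|/2, 2n} = π/2 + kπ, where x_{1,m} < x_{2,m} < ⋯ < x_{m−|λ|,m} denote the real zeros of P_m arranged in increasing order (for m ≥ |λ|+λ_1 there are exactly m−|λ| of them). -/
open Polynomial

/-- The physicists' Hermite polynomials: `H 0 = 1`, `H (n+1) = 2X * H n - (H n)'`. -/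
noncomputable def physHermite : ℕ → Polynomial ℝ
  | 0 => 1
  | n + 1 => 2 * X * physHermite n - derivative (physHermite n)

/-- Wronskian determinant of a finite family of polynomials. -/
noncomputable def Wron {m : ℕ} (f : Fin m → Polynomial ℝ) : Polynomial ℝ :=
  Matrix.det (Matrix.of fun i j : Fin m => (fun p => derivative p)^[(i : ℕ)] (f j))

/-- `lam : Fin r → ℕ` is a partition: weakly decreasing with positive parts. -/
def IsPartition (r : ℕ) (lam : Fin r → ℕ) : Prop :=
  (∀ i j : Fin r, i ≤ j → lam j ≤ lam i) ∧ ∀ i, 1 ≤ lam i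

/-- An even (double) partition: `r` even and `λ_{2k-1} = λ_{2k}`. -/
def IsEvenPartition (r : ℕ) (lam : Fin r → ℕ) : Prop :=
  IsPartition r lam ∧ Even r ∧
    ∀ k : ℕ, ∀ h : 2 * k + 1 < r, lam ⟨2 * k, by omega⟩ = lam ⟨2 * k + 1, h⟩

/-- The generalized Hermite polynomial `H_λ = Wr[H_{λ_r}, H_{λ_{r-1}+1}, …, H_{λ_1+r-1}]`. -/
noncomputable def genHermite (r : ℕ) (lam : Fin r → ℕ) : Polynomial ℝ :=
  Wron fun j : Fin r => physHermite (lam (Fin.rev j) + j)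

/-- The exceptional Hermite polynomial
`P_n = Wr[H_{λ_r}, H_{λ_{r-1}+1}, …, H_{λ_1+r-1}, H_{n-|λ|+r}]`. -/
noncomputable def XHermite (r : ℕ) (lam : Fin r → ℕ) (n : ℕ) : Polynomial ℝ :=
  Wron fun j : Fin (r + 1) =>
    if h : (j : ℕ) < r then physHermite (lam (Fin.rev ⟨(j : ℕ), h⟩) + j)
    else physHermite (n + r - ∑ i, lam i)

/-- The degree sequence `N_λ`: `n ≥ |λ| - r` and `n ≠ |λ| + λ_j - j` for `j = 1, …, r`. -/
def XDegSeq (r : ℕ) (lam : Fin r → ℕ) (n : ℕ) : Prop :=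
  (∑ i, lam i) ≤ n + r ∧ ∀ i : Fin r, n ≠ (∑ i, lam i) + lam i - ((i : ℕ) + 1)

/-!
For real `s → ∞` and `4m / s² → 1`, the normalized polynomials `H_{2m}(z/s) / H_{2m}(0)` converge
to `cos z` locally uniformly on `ℂ`, by dominated convergence on their coefficients; hence so do all
derivatives. In the expansion of the Wronskian `P_{2n}` along its last column every derivative of
the last entry gains a factor `s`, so only the highest one survives, and `P_{2n}(z/(2√n))` suitably
normalized converges to `± H_λ(0) cos z`. For an even partition `H_λ(0) ≠ 0`: sorting rows and
columns by parity splits the matrix of `H_λ(0)` into two blocks of Vandermonde type. The zeros of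
the cosine being simple, the rescaled zeros converge to them one by one; the symmetry of the zero
set about the origin fixes the indexing.
-/

/-! ### Coefficients of the Hermite polynomials -/

section HermiteCoefficients

open scoped Nat

theorem derivative_physHermite_succ (n : ℕ) :
    derivative (physHermite (n + 1)) = C (2 * ((n : ℝ) + 1)) * physHermite n := by
  induction n with
  | zero => simp [physHermite, ← C_ofNat]
  | succ n ih =>
    have hrec : ∀ n, physHermite (n + 1) = 2 * X * physHermite n - derivative (physHermite n) :=
      fun _ => rfl
    rw [hrec (n + 1), derivative_sub, derivative_mul, ih, derivative_C_mul, hrec n]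
    simp only [derivative_mul, derivative_ofNat, derivative_X, map_mul, map_add, map_natCast,
      map_ofNat, map_one]
    push_cast
    ring

theorem derivative_derivative_physHermite (n : ℕ) :
    derivative (derivative (physHermite n)) =
      2 * X * derivative (physHermite n) - C (2 * (n : ℝ)) * physHermite n := by
  cases n with
  | zero => simp [physHermite]
  | succ n =>
    have hrec : physHermite (n + 1) = 2 * X * physHermite n - derivative (physHermite n) := rfl
    rw [derivative_physHermite_succ, derivative_C_mul, hrec]
    push_cast
    ring

theorem coeff_physHermite_add_two (n k : ℕ) :
    ((k : ℝ) + 1) * (k + 2) * (physHermite n).coeff (k + 2) =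
      -(2 * (n - k)) * (physHermite n).coeff k := by
  have h := congrArg (coeff · k) (derivative_derivative_physHermite n)
  have hX : (2 * X * derivative (physHermite n)).coeff k = 2 * k * (physHermite n).coeff k := by
    cases k with
    | zero => simp [mul_assoc]
    | succ k =>
      rw [mul_assoc, coeff_ofNat_mul, coeff_X_mul, coeff_derivative]
      push_cast
      ring
  simp only [coeff_derivative, coeff_sub, hX, coeff_C_mul] at h
  push_cast at h
  linear_combination h

theorem coeff_self_physHermite (n : ℕ) : (physHermite n).coeff n = 2 ^ n := by
  induction n with
  | zero => simp [physHermite]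
  | succ n ih =>
    have h := congrArg (coeff · n) (derivative_physHermite_succ n)
    simp only [coeff_derivative, coeff_C_mul, ih] at h
    refine mul_right_cancel₀ (by positivity : (n : ℝ) + 1 ≠ 0) ?_
    rw [h, pow_succ]
    ring

theorem cast_descFactorial_succ (m p : ℕ) :
    (m.descFactorial (p + 1) : ℝ) = (m - p) * m.descFactorial p := by
  rcases le_or_gt p m with hp | hp
  · rw [Nat.descFactorial_succ, Nat.cast_mul, Nat.cast_sub hp]
  · simp [Nat.descFactorial_of_lt hp]

theorem factorial_mul_coeff_physHermite (m b p : ℕ) :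
    ((2 * p + b)! : ℝ) * (physHermite (2 * m + b)).coeff (2 * p + b) =
      b ! * (physHermite (2 * m + b)).coeff b * ((-4) ^ p * m.descFactorial p) := by
  induction p with
  | zero => simp
  | succ p ih =>
    have hrec := coeff_physHermite_add_two (2 * m + b) (2 * p + b)
    have hfact : ((2 * (p + 1) + b)! : ℝ) =
        (2 * p + b)! * ((((2 * p + b : ℕ) : ℝ) + 1) * ((2 * p + b : ℕ) + 2)) := by
      rw [show 2 * (p + 1) + b = 2 * p + b + 1 + 1 by ring, Nat.factorial_succ, Nat.factorial_succ]
      push_cast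
      ring
    rw [hfact, show 2 * (p + 1) + b = 2 * p + b + 2 by ring, mul_assoc, hrec,
      cast_descFactorial_succ, pow_succ]
    push_cast
    linear_combination (-(4 * ((m : ℝ) - p))) * ih

theorem coeff_physHermite_ne_zero (m b : ℕ) : (physHermite (2 * m + b)).coeff b ≠ 0 := by
  intro h
  have hprod := factorial_mul_coeff_physHermite m b m
  rw [coeff_self_physHermite, h, mul_zero, zero_mul] at hprod
  have : ((2 * m + b)! : ℝ) * 2 ^ (2 * m + b) ≠ 0 := by positivity
  exact this hprod

theorem physHermite_comp_neg_X (n : ℕ) :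
    (physHermite n).comp (-X) = C ((-1) ^ n) * physHermite n := by
  induction n with
  | zero => simp [physHermite]
  | succ n ih =>
    have hder : (derivative (physHermite n)).comp (-X) =
        -(C ((-1) ^ n) * derivative (physHermite n)) := by
      have h := congrArg derivative ih
      rw [derivative_comp, derivative_C_mul] at h
      simp only [derivative_neg, derivative_X] at h
      linear_combination -h
    have hrec : physHermite (n + 1) = 2 * X * physHermite n - derivative (physHermite n) := rfl
    rw [hrec, sub_comp, mul_comp, mul_comp, ih, hder, ofNat_comp, X_comp, pow_succ]
    simp only [map_mul, map_neg, map_one]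
    ring

theorem coeff_physHermite_eq_zero_of_odd_add {n k : ℕ} (h : Odd (n + k)) :
    (physHermite n).coeff k = 0 := by
  have hcomp := congrArg (coeff · k) (physHermite_comp_neg_X n)
  rw [show (-X : ℝ[X]) = C (-1) * X by simp] at hcomp
  simp only [comp_C_mul_X_coeff, coeff_C_mul] at hcomp
  have hsign : (-1 : ℝ) ^ n * (-1) ^ k = -1 := by rw [← pow_add, h.neg_one_pow]
  have hsq : (-1 : ℝ) ^ k * (-1) ^ k = 1 := by rw [← mul_pow]; simp
  linear_combination
    ((-1) ^ k * hcomp + (physHermite n).coeff k * hsign - (physHermite n).coeff k * hsq) / 2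

end HermiteCoefficients

/-! ### Wronskians of polynomials -/

section Wronskian

theorem eval_Wron {m : ℕ} (f : Fin m → ℝ[X]) (t : ℝ) :
    (Wron f).eval t = Matrix.det (Matrix.of fun i j : Fin m => (derivative^[i] (f j)).eval t) := by
  rw [Wron, ← coe_evalRingHom, RingHom.map_det]
  rfl

theorem eval_zero_Wron {m : ℕ} (f : Fin m → ℝ[X]) :
    (Wron f).eval 0 =
      Matrix.det (Matrix.of fun i j : Fin m => ((i : ℕ).factorial : ℝ) * (f j).coeff i) := by
  rw [eval_Wron]
  simp only [← coeff_zero_eq_eval_zero, coeff_iterate_derivative, zero_add,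
    Nat.descFactorial_self, nsmul_eq_mul]

theorem iterate_derivative_comp_neg_X (p : ℝ[X]) (k : ℕ) :
    derivative^[k] (p.comp (-X)) = C ((-1) ^ k) * (derivative^[k] p).comp (-X) := by
  induction k with
  | zero => simp
  | succ k ih =>
    rw [Function.iterate_succ_apply', Function.iterate_succ_apply', ih, derivative_C_mul,
      derivative_comp, pow_succ]
    simp only [derivative_X, map_mul, map_neg, map_one]
    ring

theorem eval_neg_Wron_eq_zero_iff {m : ℕ} {f : Fin m → ℝ[X]} {e : Fin m → ℝ} (he : ∀ j, e j ≠ 0)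
    (hf : ∀ j, (f j).comp (-X) = C (e j) * f j) (t : ℝ) :
    (Wron f).eval (-t) = 0 ↔ (Wron f).eval t = 0 := by
  have hentry : ∀ i j : Fin m, (derivative^[i] (f j)).eval (-t) =
      (-1) ^ (i : ℕ) * (e j * (derivative^[i] (f j)).eval t) := fun i j => by
    have h := congrArg (eval t) (iterate_derivative_comp_neg_X (f j) i)
    rw [hf, iterate_derivative_C_mul] at h
    simp only [eval_mul, eval_C, eval_comp, eval_neg, eval_X] at h
    rw [h, ← mul_assoc, ← mul_pow]
    simp
  have hdet : (Wron f).eval (-t) =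
      (∏ i : Fin m, (-1) ^ (i : ℕ)) * ((∏ j, e j) * (Wron f).eval t) := by
    simp only [eval_Wron, hentry]
    exact (Matrix.det_mul_column _ (Matrix.of fun i j => e j * _)).trans
      (congrArg _ (Matrix.det_mul_row e _))
  simp [hdet, Finset.prod_eq_zero_iff, he]

theorem exists_Wron_snoc_eq_sum {m : ℕ} (f : Fin m → ℝ[X]) :
    ∃ c : Fin (m + 1) → ℝ[X], c (Fin.last m) = Wron f ∧
      ∀ g, Wron (Fin.snoc f g : Fin (m + 1) → ℝ[X]) = ∑ i, c i * derivative^[i] g := by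
  refine ⟨fun i => (-1) ^ ((i : ℕ) + m) * Matrix.det (Matrix.of fun k j : Fin m =>
    derivative^[i.succAbove k] (f j)), ?_, fun g => ?_⟩
  · simp [Wron, ← two_mul]
  · rw [Wron, Matrix.det_succ_column _ (Fin.last m)]
    refine Finset.sum_congr rfl fun i _ => ?_
    simp [Matrix.submatrix, mul_right_comm]

end Wronskian

/-! ### Non-vanishing at the origin -/

section NonVanishing

theorem det_descFactorial_ne_zero {h : ℕ} {m : Fin h → ℕ} (hm : Function.Injective m) :
    Matrix.det (Matrix.of fun p q : Fin h => ((m q).descFactorial p : ℝ)) ≠ 0 := by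
  have hentry : (Matrix.of fun p q : Fin h => ((m q).descFactorial p : ℝ)).transpose =
      Matrix.of fun q p : Fin h => (descPochhammer ℝ p).eval (m q : ℝ) := by
    ext q p
    simp [descPochhammer_eval_eq_descFactorial]
  rw [← Matrix.det_transpose, hentry,
    ← Matrix.det_eval_matrixOfPolynomials_eq_det_vandermonde (fun q => (m q : ℝ))
      (fun p : Fin h => descPochhammer ℝ p) (fun p => descPochhammer_natDegree ℝ p)
      (fun p => monic_descPochhammer ℝ p)]
  exact Matrix.det_vandermonde_ne_zero_iff.2 (Nat.cast_injective.comp hm)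

theorem det_factorial_mul_coeff_physHermite_ne_zero {h : ℕ} (b : ℕ) {m : Fin h → ℕ}
    (hm : Function.Injective m) :
    Matrix.det (Matrix.of fun p q : Fin h => ((2 * p + b).factorial : ℝ) *
      (physHermite (2 * m q + b)).coeff (2 * p + b)) ≠ 0 := by
  have hdet : Matrix.det (Matrix.of fun p q : Fin h => ((2 * p + b).factorial : ℝ) *
      (physHermite (2 * m q + b)).coeff (2 * p + b)) =
      (∏ q, (b.factorial : ℝ) * (physHermite (2 * m q + b)).coeff b) *
        ((∏ p : Fin h, (-4) ^ (p : ℕ)) *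
          Matrix.det (Matrix.of fun p q : Fin h => ((m q).descFactorial p : ℝ))) := by
    simp only [factorial_mul_coeff_physHermite]
    exact (Matrix.det_mul_row _ (Matrix.of fun p q : Fin h => _)).trans
      (congrArg _ (Matrix.det_mul_column _ (Matrix.of fun p q : Fin h => _)))
  simp [hdet, Finset.prod_eq_zero_iff, Nat.factorial_ne_zero, coeff_physHermite_ne_zero,
    det_descFactorial_ne_zero hm]

theorem eval_zero_Wron_physHermite_ne_zero {h : ℕ} {d : Fin (h * 2) → ℕ}
    (hd : Function.Injective d) (σ : Fin h × Fin 2 ≃ Fin (h * 2))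
    (hσ : ∀ x, d (σ x) % 2 = x.2) :
    (Wron fun j => physHermite (d j)).eval 0 ≠ 0 := by
  set A : Matrix (Fin (h * 2)) (Fin (h * 2)) ℝ :=
    Matrix.of fun i j => ((i : ℕ).factorial : ℝ) * (physHermite (d j)).coeff i with hA
  have hdσ : ∀ x, d (σ x) = 2 * (d (σ x) / 2) + x.2 := fun x => by have := hσ x; omega
  -- An entry vanishes unless the derivative order and the degree have the same parity.
  have hblock : A.submatrix finProdFinEquiv σ = Matrix.blockDiagonal fun b : Fin 2 =>
      Matrix.of fun p q : Fin h => ((2 * p + b : ℕ).factorial : ℝ) *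
        (physHermite (2 * (d (σ (q, b)) / 2) + b)).coeff (2 * p + b) := by
    ext ⟨p, b⟩ ⟨q, c⟩
    have hrow : (finProdFinEquiv (p, b) : ℕ) = 2 * p + b := add_comm _ _
    simp only [hA, Matrix.submatrix_apply, Matrix.of_apply, Matrix.blockDiagonal_apply, hrow]
    split_ifs with hbc
    · subst hbc
      rw [hdσ (q, b)]
      simp only [← hdσ (q, b)]
    · have hodd : Odd (d (σ (q, c)) + (2 * p + b)) := by
        have : d (σ (q, c)) % 2 = c := hσ (q, c)
        have := Fin.val_ne_of_ne hbc
        rw [Nat.odd_iff]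
        omega
      rw [coeff_physHermite_eq_zero_of_odd_add hodd, mul_zero]
  have hdet : Matrix.det (A.submatrix finProdFinEquiv σ) ≠ 0 := by
    rw [hblock, Matrix.det_blockDiagonal, Finset.prod_ne_zero_iff]
    refine fun b _ => det_factorial_mul_coeff_physHermite_ne_zero b fun q q' hq => ?_
    have hq' : d (σ (q, b)) = d (σ (q', b)) := by
      rw [hdσ (q, b), hdσ (q', b)]
      simpa using hq
    exact congrArg Prod.fst (σ.injective (hd hq'))
  rw [eval_zero_Wron]
  have := (Matrix.isUnit_submatrix_equiv (A := A) finProdFinEquiv σ).1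
    ((Matrix.isUnit_iff_isUnit_det _).2 hdet.isUnit)
  exact ((Matrix.isUnit_iff_isUnit_det _).1 this).ne_zero

theorem IsPartition.injective_degrees {r : ℕ} {lam : Fin r → ℕ} (hlam : IsPartition r lam) :
    Function.Injective fun j : Fin r => lam (Fin.rev j) + j :=
  StrictMono.injective fun _ _ hij =>
    add_lt_add_of_le_of_lt (hlam.1 _ _ (Fin.rev_le_rev.2 hij.le)) hij

theorem IsEvenPartition.apply_finProdFinEquiv {h : ℕ} {lam : Fin (h * 2) → ℕ}
    (hlam : IsEvenPartition (h * 2) lam) (q : Fin h) (c : Fin 2) :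
    lam (finProdFinEquiv (q, c)) = lam (finProdFinEquiv (q, 0)) := by
  have hpair := hlam.2.2 q (by omega)
  fin_cases c
  · rfl
  · convert hpair.symm using 2 <;> ext <;> simp [add_comm]

theorem IsEvenPartition.even_sum {r : ℕ} {lam : Fin r → ℕ} (hlam : IsEvenPartition r lam) :
    Even (∑ i, lam i) := by
  obtain ⟨h, rfl⟩ := exists_eq_mul_left_of_dvd hlam.2.1.two_dvd
  rw [← finProdFinEquiv.sum_comp, Fintype.sum_prod_type]
  refine Finset.even_sum _ fun q _ => ?_
  rw [Fin.sum_univ_two, hlam.apply_finProdFinEquiv q 1]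
  exact Even.add_self _

theorem IsEvenPartition.eval_zero_genHermite_ne_zero {r : ℕ} {lam : Fin r → ℕ}
    (hlam : IsEvenPartition r lam) : (genHermite r lam).eval 0 ≠ 0 := by
  obtain ⟨h, rfl⟩ := exists_eq_mul_left_of_dvd hlam.2.1.two_dvd
  set l : Fin h → ℕ := fun q => lam (finProdFinEquiv (Fin.rev q, 0))
  -- Equal parts sit in consecutive columns, so their degrees are `l q + 2 * q` and its successor;
  -- `σ` swaps the two columns when `l q` is odd, to put the even degree first.
  let σ : Fin h × Fin 2 ≃ Fin (h * 2) :=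
    (Equiv.prodShear (Equiv.refl _) fun q => Equiv.addRight (Fin.ofNat 2 (l q))).trans
      finProdFinEquiv
  refine eval_zero_Wron_physHermite_ne_zero hlam.1.injective_degrees σ fun ⟨q, c⟩ => ?_
  have hval : (σ (q, c) : ℕ) = (c + l q) % 2 + 2 * q := by
    simp [σ, finProdFinEquiv, Fin.val_add]
  have hrev : Fin.rev (σ (q, c)) =
      finProdFinEquiv (Fin.rev q, Fin.rev (c + Fin.ofNat 2 (l q))) := by
    ext
    simp only [Fin.val_rev, hval, finProdFinEquiv, Fin.ofNat_eq_cast, Equiv.coe_fn_mk, Fin.val_add,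
      Fin.val_natCast, Nat.add_mod_mod, Nat.reduceSubDiff]
    omega
  simp only [hrev, hlam.apply_finProdFinEquiv, hval]
  change (l q + ((c + l q) % 2 + 2 * q)) % 2 = c
  omega

end NonVanishing

/-! ### Mehler–Heine asymptotics -/

section MehlerHeine

open Filter Topology

variable {ι : Type*} {l : Filter ι} {m : ι → ℕ} {s : ι → ℝ}

theorem tendstoLocallyUniformly_iff_tendsto_prod {α β : Type*} [TopologicalSpace α]
    [UniformSpace β] {F : ι → α → β} {f : α → β} (hf : Continuous f) :
    TendstoLocallyUniformly F f l ↔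
      ∀ a, Tendsto (fun q : ι × α => F q.1 q.2) (l ×ˢ 𝓝 a) (𝓝 (f a)) := by
  rw [tendstoLocallyUniformly_iff_forall_tendsto]
  refine forall_congr' fun a => ?_
  have ha : Tendsto (fun q : ι × α => f q.2) (l ×ˢ 𝓝 a) (𝓝 (f a)) :=
    (hf.tendsto a).comp tendsto_snd
  exact ⟨fun h => (Uniform.tendsto_congr h).1 ha,
    fun h => (ha.prodMk_nhds h).mono_right (nhds_le_uniformity _)⟩

theorem tendsto_descFactorial_mul_pow (hs : Tendsto s l atTop)
    (hm : Tendsto (fun i => 4 * m i / s i ^ 2) l (𝓝 1)) (p : ℕ) :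
    Tendsto (fun i => (m i).descFactorial p * (4 / s i ^ 2) ^ p) l (𝓝 1) := by
  induction p with
  | zero => simp [tendsto_const_nhds]
  | succ p ih =>
    have hinv : Tendsto (fun i => (s i ^ 2)⁻¹) l (𝓝 0) :=
      ((tendsto_pow_atTop two_ne_zero).comp hs).inv_tendsto_atTop
    have hfac : Tendsto (fun i => 4 * m i / s i ^ 2 - 4 * p * (s i ^ 2)⁻¹) l (𝓝 1) := by
      simpa using hm.sub (hinv.const_mul (4 * p : ℝ))
    refine (mul_one (1 : ℝ) ▸ ih.mul hfac).congr fun i => ?_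
    rw [cast_descFactorial_succ, pow_succ]
    ring

theorem descFactorial_mul_pow_le {n : ℕ} {t : ℝ} (h : 4 * n / t ^ 2 ≤ 4) (p : ℕ) :
    n.descFactorial p * (4 / t ^ 2) ^ p ≤ 4 ^ p :=
  calc (n.descFactorial p : ℝ) * (4 / t ^ 2) ^ p
      ≤ n ^ p * (4 / t ^ 2) ^ p := by
        gcongr
        exact_mod_cast Nat.descFactorial_le_pow n p
    _ = (4 * n / t ^ 2) ^ p := by rw [← mul_pow]; ring
    _ ≤ 4 ^ p := by gcongr

theorem eval_zero_physHermite_two_mul_ne_zero (n : ℕ) : (physHermite (2 * n)).eval 0 ≠ 0 := by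
  rw [← coeff_zero_eq_eval_zero]
  exact coeff_physHermite_ne_zero n 0

theorem hasSum_aeval_physHermite_two_mul (n : ℕ) (z : ℂ) :
    HasSum (fun p : ℕ => (-4) ^ p * n.descFactorial p / (2 * p).factorial * z ^ (2 * p))
      (aeval z (physHermite (2 * n)) / ((physHermite (2 * n)).eval 0 : ℝ)) := by
  have hsum : HasSum (fun k => (physHermite (2 * n)).coeff k • z ^ k)
      (aeval z (physHermite (2 * n))) := by
    rw [aeval_eq_sum_range]
    refine hasSum_sum_of_ne_finset_zero fun k hk => ?_
    rw [coeff_eq_zero_of_natDegree_lt (by simpa using hk), zero_smul]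
  have heven := (Function.Injective.hasSum_iff (mul_right_injective₀ (two_ne_zero' ℕ))
    fun k hk => ?_).2 hsum
  · refine (heven.div_const _).congr_fun fun p => ?_
    have h0 := eval_zero_physHermite_two_mul_ne_zero n
    have hcoeff : (physHermite (2 * n)).coeff (2 * p) =
        (-4) ^ p * n.descFactorial p / (2 * p).factorial * (physHermite (2 * n)).eval 0 := by
      have h := factorial_mul_coeff_physHermite n 0 p
      simp only [add_zero, Nat.factorial_zero, Nat.cast_one, one_mul,
        coeff_zero_eq_eval_zero] at h
      rw [div_mul_eq_mul_div, eq_div_iff (by positivity)]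
      linear_combination h
    rw [Function.comp_apply, hcoeff, Complex.real_smul, Complex.ofReal_mul, mul_right_comm,
      mul_div_cancel_right₀ _ (Complex.ofReal_ne_zero.2 h0)]
    push_cast
    rfl
  · have hodd : Odd k := by
      rw [← Nat.not_even_iff_odd, even_iff_exists_two_mul]
      rintro ⟨p, rfl⟩
      exact hk ⟨p, rfl⟩
    rw [coeff_physHermite_eq_zero_of_odd_add ((even_two_mul n).add_odd hodd), zero_smul]

theorem tendstoLocallyUniformly_physHermite_cos (hs : Tendsto s l atTop)
    (hm : Tendsto (fun i => 4 * m i / s i ^ 2) l (𝓝 1)) :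
    TendstoLocallyUniformly
      (fun i (z : ℂ) => aeval (z / s i) (physHermite (2 * m i)) /
        ((physHermite (2 * m i)).eval 0 : ℝ)) Complex.cos l := by
  rw [tendstoLocallyUniformly_iff_tendsto_prod Complex.continuous_cos]
  intro z
  have hterm : ∀ (q : ι × ℂ) (p : ℕ), (-4) ^ p * (m q.1).descFactorial p / (2 * p).factorial *
      (q.2 / s q.1) ^ (2 * p) = ((m q.1).descFactorial p * (4 / s q.1 ^ 2) ^ p : ℝ) *
        ((-1) ^ p * q.2 ^ (2 * p) / (2 * p).factorial) := by
    intro q p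
    push_cast
    rw [neg_pow, div_pow, pow_mul _ 2 p]
    ring
  simp_rw [← (hasSum_aeval_physHermite_two_mul _ _).tsum_eq, ← (Complex.hasSum_cos z).tsum_eq,
    hterm]
  set R := ‖z‖ + 1
  have hsum : Summable fun p : ℕ => (2 * R) ^ (2 * p) / (2 * p).factorial :=
    (Real.summable_pow_div_factorial (2 * R)).comp_injective (mul_right_injective₀ two_ne_zero)
  refine tendsto_tsum_of_dominated_convergence hsum (fun p => ?_) ?_
  · have hu := (Complex.continuous_ofReal.tendsto 1).comp (tendsto_descFactorial_mul_pow hs hm p)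
    have hcont : Continuous fun w : ℂ => (-1) ^ p * w ^ (2 * p) / (2 * p).factorial := by fun_prop
    simpa using (hu.comp tendsto_fst).mul ((hcont.tendsto z).comp tendsto_snd)
  · have hR : ∀ᶠ w in 𝓝 z, ‖w‖ ≤ R :=
      (continuous_norm.tendsto z).eventually_le_const (lt_add_one _)
    have h4 : ∀ᶠ i in l, 4 * m i / s i ^ 2 ≤ 4 := hm.eventually_le_const (by norm_num)
    filter_upwards [h4.prod_mk hR] with q ⟨hq4, hqR⟩ p
    rw [norm_mul, Complex.norm_real, Real.norm_of_nonneg (by positivity)]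
    calc _ ≤ 4 ^ p * (R ^ (2 * p) / (2 * p).factorial) := by
          gcongr
          · exact descFactorial_mul_pow_le hq4 p
          · simp only [norm_div, norm_mul, norm_pow, norm_neg, norm_one, one_pow, one_mul,
              Complex.norm_natCast]
            gcongr
      _ = (2 * R) ^ (2 * p) / (2 * p).factorial := by
          rw [mul_pow, pow_mul 2 2 p, mul_div_assoc]
          norm_num

theorem tendstoLocallyUniformly_aeval_derivative {p : ι → ℝ[X]} {a s : ι → ℂ} {g : ℂ → ℂ}
    (h : TendstoLocallyUniformly (fun i z => aeval (z / s i) (p i) / a i) g l) :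
    TendstoLocallyUniformly (fun i z => aeval (z / s i) (derivative (p i)) / (a i * s i))
      (deriv g) l := by
  have hderiv : ∀ i z, HasDerivAt (fun z => aeval (z / s i) (p i) / a i)
      (aeval (z / s i) (derivative (p i)) / (a i * s i)) z := fun i z => by
    have hp := ((p i).hasDerivAt_aeval (z / s i)).comp z ((hasDerivAt_id z).div_const (s i))
    exact (hp.div_const (a i)).congr_deriv (by field)
  rw [← tendstoLocallyUniformlyOn_univ] at h ⊢
  refine (h.deriv (.of_forall fun i z _ => (hderiv i z).differentiableAt.differentiableWithinAt)
    isOpen_univ).congr fun i z _ => (hderiv i z).deriv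

theorem tendstoLocallyUniformly_aeval_iterate_derivative {p : ι → ℝ[X]} {a s : ι → ℂ} {g : ℂ → ℂ}
    (h : TendstoLocallyUniformly (fun i z => aeval (z / s i) (p i) / a i) g l) (k : ℕ) :
    TendstoLocallyUniformly (fun i z => aeval (z / s i) (derivative^[k] (p i)) / (a i * s i ^ k))
      (iteratedDeriv k g) l := by
  induction k with
  | zero => simpa using h
  | succ k ih =>
    simpa only [Function.iterate_succ_apply', pow_succ, ← mul_assoc, iteratedDeriv_succ] using
      tendstoLocallyUniformly_aeval_derivative ih

theorem tendstoLocallyUniformly_aeval_Wron_snoc {r : ℕ} (f : Fin r → ℝ[X]) {p : ι → ℝ[X]}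
    {a s : ι → ℂ} {g : ℂ → ℂ} (hs : Tendsto s l (Bornology.cobounded ℂ))
    (hg : Differentiable ℂ g)
    (h : TendstoLocallyUniformly (fun i z => aeval (z / s i) (p i) / a i) g l) :
    TendstoLocallyUniformly
      (fun i z => aeval (z / s i) (Wron (Fin.snoc f (p i) : Fin (r + 1) → ℝ[X])) /
        (a i * s i ^ r))
      (fun z => (Wron f).eval 0 * iteratedDeriv r g z) l := by
  obtain ⟨c, hc_last, hc⟩ := exists_Wron_snoc_eq_sum f
  have hcont : ∀ k, Continuous (iteratedDeriv k g) := fun k =>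
    hg.contDiff.continuous_iteratedDeriv k le_top
  rw [tendstoLocallyUniformly_iff_tendsto_prod (by fun_prop)]
  intro z
  have hinv : Tendsto (fun q : ι × ℂ => (s q.1)⁻¹) (l ×ˢ 𝓝 z) (𝓝 0) :=
    (tendsto_inv₀_cobounded.comp hs).comp tendsto_fst
  have harg : Tendsto (fun q : ι × ℂ => q.2 / s q.1) (l ×ˢ 𝓝 z) (𝓝 0) := by
    simpa [div_eq_mul_inv] using tendsto_snd.mul hinv
  have hterm : ∀ k : Fin (r + 1), Tendsto (fun q : ι × ℂ => aeval (q.2 / s q.1) (c k) *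
      (aeval (q.2 / s q.1) (derivative^[k] (p q.1)) / (a q.1 * s q.1 ^ (k : ℕ))) *
        (s q.1)⁻¹ ^ (r - k)) (l ×ˢ 𝓝 z)
      (𝓝 (aeval 0 (c k) * iteratedDeriv k g z * 0 ^ (r - k))) := fun k =>
    ((((c k).continuous_aeval.tendsto 0).comp harg).mul
      ((tendstoLocallyUniformly_iff_tendsto_prod (hcont k)).1
        (tendstoLocallyUniformly_aeval_iterate_derivative h k) z)).mul (hinv.pow _)
  convert tendsto_finsetSum Finset.univ fun k _ => hterm k using 2 with q
  · rw [hc, map_sum, Finset.sum_div]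
    refine Finset.sum_congr rfl fun k _ => ?_
    have hpow : s q.1 ^ r = s q.1 ^ (k : ℕ) * s q.1 ^ (r - k) := by
      rw [← pow_add, Nat.add_sub_of_le (Nat.le_of_lt_succ k.2)]
    rw [map_mul, hpow, inv_pow]
    ring
  · rw [Fin.sum_univ_castSucc, Finset.sum_eq_zero fun k _ => ?_]
    · have h0 : aeval (0 : ℂ) (Wron f) = ((Wron f).eval 0 : ℝ) := by
        simpa using (Polynomial.ofReal_eval (K := ℂ) (Wron f) 0).symm
      simp [hc_last, h0]
    · rw [Fin.val_castSucc, zero_pow (Nat.sub_ne_zero_of_lt k.2), mul_zero]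

theorem tendstoLocallyUniformly_eval_of_aeval {p : ι → ℝ[X]} {a s : ι → ℝ} {G : ℂ → ℂ}
    (h : TendstoLocallyUniformly (fun i (z : ℂ) => aeval (z / s i) (p i) / (a i : ℂ)) G l) :
    TendstoLocallyUniformly (fun i t => (p i).eval (t / s i) / a i) (fun t : ℝ => (G t).re) l := by
  refine (Complex.uniformContinuous_re.comp_tendstoLocallyUniformly
    (h.comp _ Complex.continuous_ofReal)).congr fun i t => ?_
  have hp : aeval ((t : ℂ) / s i) (p i) = ((p i).eval (t / s i) : ℝ) := by
    simpa using (Polynomial.ofReal_eval (K := ℂ) (p i) (t / s i)).symm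
  rw [Function.comp_apply, Function.comp_apply, hp, ← Complex.ofReal_div]
  exact Complex.ofReal_re _

theorem tendstoLocallyUniformly_aeval_Wron_snoc_physHermite {h : ℕ} (f : Fin (2 * h) → ℝ[X])
    (hs : Tendsto s l atTop) (hm : Tendsto (fun i => 4 * m i / s i ^ 2) l (𝓝 1)) :
    TendstoLocallyUniformly
      (fun i (z : ℂ) => aeval (z / s i)
          (Wron (Fin.snoc f (physHermite (2 * m i)) : Fin (2 * h + 1) → ℝ[X])) /
        ((physHermite (2 * m i)).eval 0 * s i ^ (2 * h) : ℝ))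
      (fun z => ((Wron f).eval 0 * (-1) ^ h : ℝ) * Complex.cos z) l := by
  refine ((tendstoLocallyUniformly_aeval_Wron_snoc f
    ((RCLike.tendsto_ofReal_atTop_cobounded ℂ).comp hs) Complex.differentiable_cos
    (tendstoLocallyUniformly_physHermite_cos hs hm)).congr_right fun z => ?_).congr fun i z => ?_
  · simp [Complex.iteratedDeriv_even_cos, mul_assoc]
  · simp

end MehlerHeine

/-! ### Zeros under `C¹` locally uniform convergence -/

section Zeros

open Filter Topology Set

/-- Locally uniform convergence of differentiable real functions together with their first
derivatives, towards a `C¹` limit. -/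
structure TendstoLocallyUniformlyC1 {ι : Type*} (F : ι → ℝ → ℝ) (f : ℝ → ℝ) (l : Filter ι) :
    Prop where
  differentiable : ∀ i, Differentiable ℝ (F i)
  contDiff : ContDiff ℝ 1 f
  tendsto : TendstoLocallyUniformly F f l
  tendsto_deriv : TendstoLocallyUniformly (fun i => deriv (F i)) (deriv f) l

namespace TendstoLocallyUniformlyC1

variable {ι : Type*} {l l' : Filter ι} {F : ι → ℝ → ℝ} {f : ℝ → ℝ} {p y : ι → ℝ} {a b z : ℝ}

theorem mono (h : TendstoLocallyUniformlyC1 F f l) (hl : l' ≤ l) :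
    TendstoLocallyUniformlyC1 F f l' where
  differentiable := h.differentiable
  contDiff := h.contDiff
  tendsto := fun u hu t => (h.tendsto u hu t).imp fun _ ht => ⟨ht.1, ht.2.filter_mono hl⟩
  tendsto_deriv := fun u hu t =>
    (h.tendsto_deriv u hu t).imp fun _ ht => ⟨ht.1, ht.2.filter_mono hl⟩

theorem of_aeval {p : ι → ℝ[X]} {a s : ι → ℝ} {G : ℂ → ℂ} (hG : Differentiable ℂ G)
    (h : TendstoLocallyUniformly (fun i (z : ℂ) => aeval (z / s i) (p i) / (a i : ℂ)) G l) :
    TendstoLocallyUniformlyC1 (fun i t => (p i).eval (t / s i) / a i)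
      (fun t : ℝ => (G t).re) l := by
  have hderivG : deriv (fun t : ℝ => (G t).re) = fun t : ℝ => (deriv G t).re :=
    funext fun t => (hG t).hasDerivAt.real_of_complex.deriv
  have hderiv : ∀ i t, HasDerivAt (fun t => (p i).eval (t / s i) / a i)
      ((derivative (p i)).eval (t / s i) / (a i * s i)) t := fun i t => by
    have hp := ((p i).hasDerivAt (t / s i)).comp t ((hasDerivAt_id t).div_const (s i))
    exact (hp.div_const (a i)).congr_deriv (by field)
  refine ⟨fun i t => (hderiv i t).differentiableAt,
    contDiff_iff_contDiffAt.2 fun t => hG.contDiff.contDiffAt.real_of_complex,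
    tendstoLocallyUniformly_eval_of_aeval h, ?_⟩
  rw [hderivG]
  refine (tendstoLocallyUniformly_eval_of_aeval (a := fun i => a i * s i) ?_).congr
    fun i t => (hderiv i t).deriv.symm
  simpa only [Complex.ofReal_mul] using tendstoLocallyUniformly_aeval_derivative h

theorem eventually_exists_zero_mem_Ioo (h : TendstoLocallyUniformlyC1 F f l) (hb : f b = 0)
    (hb' : deriv f b ≠ 0) {u v : ℝ} (hu : u < b) (hv : b < v) :
    ∀ᶠ i in l, ∃ t ∈ Ioo u v, F i t = 0 := by
  have hderiv : 0 < deriv (fun t => deriv f b * f t) b := by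
    rw [deriv_const_mul_field]
    exact mul_self_pos.2 hb'
  have hsign := eventually_nhdsWithin_sign_eq_of_deriv_pos hderiv (by simp [hb])
  obtain ⟨v', hv'sign, hbv', hv'v⟩ :=
    ((hsign.filter_mono nhdsWithin_le_nhds).and (Ioo_mem_nhdsGT hv)).exists
  obtain ⟨u', hu'sign, huu', hu'b⟩ :=
    ((hsign.filter_mono nhdsWithin_le_nhds).and (Ioo_mem_nhdsLT hu)).exists
  rw [sign_pos (sub_pos.2 hbv'), sign_eq_one_iff] at hv'sign
  rw [sign_neg (sub_neg.2 hu'b), sign_eq_neg_one_iff] at hu'sign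
  have hlim : ∀ t, Tendsto (fun i => deriv f b * F i t) l (𝓝 (deriv f b * f t)) := fun t =>
    (h.tendsto.tendsto_comp h.contDiff.continuous.continuousAt tendsto_const_nhds).const_mul _
  filter_upwards [(hlim v').eventually_const_lt hv'sign, (hlim u').eventually_lt_const hu'sign]
    with i hiv hiu
  obtain ⟨t, ht, ht0⟩ := intermediate_value_Ioo (hu'b.trans hbv').le
    ((h.differentiable i).continuous.const_mul (deriv f b)).continuousOn ⟨hiu, hiv⟩
  exact ⟨t, ⟨huu'.trans ht.1, ht.2.trans hv'v⟩, (mul_eq_zero.1 ht0).resolve_left hb'⟩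

theorem eq_zero_of_tendsto [l.NeBot] (h : TendstoLocallyUniformlyC1 F f l)
    (hy : Tendsto y l (𝓝 z)) (hy0 : ∀ᶠ i in l, F i (y i) = 0) : f z = 0 :=
  tendsto_nhds_unique (h.tendsto.tendsto_comp h.contDiff.continuous.continuousAt hy)
    (tendsto_const_nhds.congr' (hy0.mono fun _ hi => hi.symm))

theorem deriv_eq_zero_of_tendsto [l.NeBot] (h : TendstoLocallyUniformlyC1 F f l)
    (hp : Tendsto p l (𝓝 z)) (hy : Tendsto y l (𝓝 z)) (hpy : ∀ᶠ i in l, p i < y i)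
    (heq : ∀ᶠ i in l, F i (p i) = F i (y i)) : deriv f z = 0 := by
  obtain ⟨ξ, hξ⟩ : ∃ ξ : ι → ℝ, ∀ᶠ i in l, ξ i ∈ Ioo (p i) (y i) ∧ deriv (F i) (ξ i) = 0 :=
    Eventually.choice <| by
      filter_upwards [hpy, heq] with i hi hi'
      exact exists_deriv_eq_zero hi (h.differentiable i).continuous.continuousOn hi'
  have hξz : Tendsto ξ l (𝓝 z) := tendsto_of_tendsto_of_tendsto_of_le_of_le' hp hy
    (hξ.mono fun _ hi => hi.1.1.le) (hξ.mono fun _ hi => hi.1.2.le)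
  exact tendsto_nhds_unique
    (h.tendsto_deriv.tendsto_comp (h.contDiff.continuous_deriv le_rfl).continuousAt hξz)
    (tendsto_const_nhds.congr' (hξ.mono fun _ hi => hi.2.symm))

theorem eventually_lt_of_isLeast_zero (h : TendstoLocallyUniformlyC1 F f l)
    (hb' : deriv f b ≠ 0) (hp : Tendsto p l (𝓝 a))
    (hy : ∀ᶠ i in l, IsLeast {t | F i t = 0 ∧ p i < t} (y i))
    (hb : IsLeast {t | f t = 0 ∧ a < t} b) {v : ℝ} (hv : b < v) : ∀ᶠ i in l, y i < v := by
  obtain ⟨u, hau, hub⟩ := exists_between hb.1.2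
  filter_upwards [h.eventually_exists_zero_mem_Ioo hb.1.1 hb' hub hv, hy,
    hp.eventually_lt_const hau] with i ⟨t, ht, ht0⟩ hyi hpi
  exact (hyi.2 ⟨ht0, hpi.trans ht.1⟩).trans_lt ht.2

theorem eq_of_tendsto_isLeast_zero [l.NeBot] (h : TendstoLocallyUniformlyC1 F f l)
    (hsimple : ∀ t, f t = 0 → deriv f t ≠ 0) (hp : Tendsto p l (𝓝 a))
    (hp0 : f a = 0 → ∀ᶠ i in l, F i (p i) = 0)
    (hy : ∀ᶠ i in l, IsLeast {t | F i t = 0 ∧ p i < t} (y i))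
    (hb : IsLeast {t | f t = 0 ∧ a < t} b) (hyz : Tendsto y l (𝓝 z)) : z = b := by
  have hy0 : ∀ᶠ i in l, F i (y i) = 0 := hy.mono fun _ hi => hi.1.1
  have hpy : ∀ᶠ i in l, p i < y i := hy.mono fun _ hi => hi.1.2
  have hz : f z = 0 := h.eq_zero_of_tendsto hyz hy0
  have hza : a ≠ z := by
    rintro rfl
    refine hsimple a hz (h.deriv_eq_zero_of_tendsto hp hyz hpy ?_)
    filter_upwards [hp0 hz, hy0] with i hi hi'
    rw [hi, hi']
  have haz : a ≤ z := le_of_tendsto_of_tendsto hp hyz (hpy.mono fun _ hi => hi.le)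
  refine le_antisymm (le_of_forall_gt_imp_ge_of_dense fun v hv => ?_) (hb.2 ⟨hz, haz.lt_of_ne hza⟩)
  exact le_of_tendsto hyz
    ((h.eventually_lt_of_isLeast_zero (hsimple b hb.1.1) hp hy hb hv).mono fun _ hi => hi.le)

/-- If `f a = 0`, then `hp0` keeps `y` away from `a`: two zeros of `F i` merging at `a` would make
`a` a double zero of `f`. -/
theorem tendsto_isLeast_zero (h : TendstoLocallyUniformlyC1 F f l)
    (hsimple : ∀ t, f t = 0 → deriv f t ≠ 0) (hp : Tendsto p l (𝓝 a))
    (hp0 : f a = 0 → ∀ᶠ i in l, F i (p i) = 0)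
    (hy : ∀ᶠ i in l, IsLeast {t | F i t = 0 ∧ p i < t} (y i))
    (hb : IsLeast {t | f t = 0 ∧ a < t} b) : Tendsto y l (𝓝 b) := by
  have hmem : ∀ᶠ i in l, y i ∈ Icc (a - 1) (b + 1) := by
    filter_upwards [h.eventually_lt_of_isLeast_zero (hsimple b hb.1.1) hp hy hb (lt_add_one b), hy,
      hp.eventually_const_lt (sub_one_lt a)] with i hib hyi hia
    exact ⟨(hia.trans hyi.1.2).le, hib.le⟩
  refine isCompact_Icc.tendsto_nhds_of_unique_mapClusterPt hmem fun z _ hz => ?_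
  obtain ⟨U, hU, hyU⟩ := mapClusterPt_iff_ultrafilter.1 hz
  exact (h.mono hU).eq_of_tendsto_isLeast_zero hsimple (hp.mono_left hU)
    (fun ha => (hp0 ha).filter_mono hU) (hy.filter_mono hU) hb hyU

end TendstoLocallyUniformlyC1

end Zeros

/-! ### Enumerated zero sets -/

section Enumeration

open Filter Topology Set

/-- `y 1 < ⋯ < y m` lists the elements of `Z`; the values of `y` outside `1, …, m` are junk. -/
def IsIncreasingEnum (y : ℕ → ℝ) (m : ℕ) (Z : Set ℝ) : Prop :=
  StrictMonoOn y (Icc 1 m) ∧ y '' Icc 1 m = Z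

namespace IsIncreasingEnum

variable {y : ℕ → ℝ} {m M : ℕ} {Z : Set ℝ}

theorem mul_const_pos (h : IsIncreasingEnum y m Z) {c : ℝ} (hc : 0 < c) :
    IsIncreasingEnum (fun j => c * y j) m {t | t / c ∈ Z} := by
  refine ⟨fun i hi j hj hij => mul_lt_mul_of_pos_left (h.1 hi hj hij) hc, ?_⟩
  ext t
  simp only [mem_image, mem_ofPred_eq, ← h.2, eq_div_iff hc.ne', mul_comm c]

theorem lt_of_apply_lt (h : IsIncreasingEnum y m Z) {j : ℕ} (hj : j ∈ Icc 1 m) {t : ℝ}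
    (ht : t ∈ Z) (hjt : y j < t) : j < m := by
  obtain ⟨i, hi, rfl⟩ := h.2.superset ht
  exact ((h.1.lt_iff_lt hj hi).1 hjt).trans_le hi.2

theorem isLeast_gt (h : IsIncreasingEnum y m Z) {j : ℕ} (hj : 1 ≤ j) (hjm : j + 1 ≤ m) :
    IsLeast {t | t ∈ Z ∧ y j < t} (y (j + 1)) := by
  have hj' : j ∈ Icc 1 m := ⟨hj, by omega⟩
  have hj1 : j + 1 ∈ Icc 1 m := ⟨by omega, hjm⟩
  refine ⟨⟨h.2 ▸ mem_image_of_mem y hj1, h.1 hj' hj1 j.lt_succ_self⟩, ?_⟩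
  rintro t ⟨ht, hjt⟩
  obtain ⟨i, hi, rfl⟩ := h.2.superset ht
  exact (h.1.le_iff_le hj1 hi).2 ((h.1.lt_iff_lt hj' hi).1 hjt)

theorem eqOn {y' : ℕ → ℝ} (h : IsIncreasingEnum y m Z) (h' : IsIncreasingEnum y' m Z) :
    EqOn y y' (Icc 1 m) := by
  refine domRestrict_eq_domRestrict_iff.1 ((h.1.strictMono.range_inj h'.1.strictMono).1 ?_)
  rw [range_comp, range_comp, Subtype.range_coe, h.2, h'.2]

theorem neg_reverse (h : IsIncreasingEnum y m Z) :
    IsIncreasingEnum (fun j => -y (m + 1 - j)) m {t | -t ∈ Z} := by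
  have hrev : ∀ {j}, j ∈ Icc 1 m → m + 1 - j ∈ Icc 1 m := fun hj => by
    simp only [mem_Icc] at hj ⊢
    omega
  refine ⟨fun i hi j hj hij => neg_lt_neg (h.1 (hrev hj) (hrev hi) ?_), ?_⟩
  · simp only [mem_Icc] at hi hj
    omega
  · refine Subset.antisymm ?_ fun t ht => ?_
    · rintro _ ⟨j, hj, rfl⟩
      rw [mem_ofPred_eq, neg_neg, ← h.2]
      exact mem_image_of_mem y (hrev hj)
    · obtain ⟨j, hj, hjt⟩ := h.2.superset ht
      refine ⟨m + 1 - j, hrev hj, ?_⟩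
      simp only [mem_Icc] at hj
      simp only [Nat.sub_sub_self (show j ≤ m + 1 by omega), hjt, neg_neg]

theorem apply_add_one_sub (h : IsIncreasingEnum y m Z) (hZ : ∀ t, -t ∈ Z ↔ t ∈ Z) {j : ℕ}
    (hj : j ∈ Icc 1 m) : y (m + 1 - j) = -y j := by
  have hneg : IsIncreasingEnum (fun j => -y (m + 1 - j)) m Z := by
    simpa only [hZ, ofPred_mem_eq] using h.neg_reverse
  rw [← hneg.eqOn h hj, neg_neg]

theorem isLeast_pos (h : IsIncreasingEnum y (2 * M) Z) (hZ : ∀ t, -t ∈ Z ↔ t ∈ Z) (hM : 1 ≤ M) :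
    IsLeast {t | t ∈ Z ∧ 0 < t} (y (M + 1)) := by
  have hle : M ∈ Icc 1 (2 * M) := ⟨hM, by omega⟩
  have hM1 : M + 1 ∈ Icc 1 (2 * M) := ⟨by omega, by omega⟩
  have hneg : y (M + 1) = -y M := by
    simpa only [show 2 * M + 1 - M = M + 1 by omega] using h.apply_add_one_sub hZ hle
  have hlt : y M < y (M + 1) := h.1 hle hM1 M.lt_succ_self
  obtain ⟨hmem, hmin⟩ := h.isLeast_gt hM hM1.2
  exact ⟨⟨hmem.1, by linarith⟩, fun t ht => hmin ⟨ht.1, by linarith [ht.2]⟩⟩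

end IsIncreasingEnum

theorem isLeast_cos_eq_zero_gt (k : ℤ) :
    IsLeast {t | Real.cos t = 0 ∧ Real.pi / 2 + k * Real.pi < t}
      (Real.pi / 2 + (k + 1 : ℤ) * Real.pi) := by
  have hπ := Real.pi_pos
  refine ⟨⟨Real.cos_eq_zero_iff.2 ⟨k + 1, by ring⟩, ?_⟩, ?_⟩
  · push_cast
    linarith
  · rintro t ⟨ht, hkt⟩
    obtain ⟨n, rfl⟩ := Real.cos_eq_zero_iff.1 ht
    have hkn : (k : ℝ) < n := lt_of_mul_lt_mul_right (by linarith) hπ.le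
    have hkn' : ((k + 1 : ℤ) : ℝ) ≤ n := Int.cast_le.2 (Int.add_one_le_iff.2 (Int.cast_lt.1 hkn))
    linarith [mul_le_mul_of_nonneg_right hkn' hπ.le]

theorem isLeast_cos_eq_zero_pos : IsLeast {t | Real.cos t = 0 ∧ 0 < t} (Real.pi / 2) := by
  have hπ := Real.pi_pos
  refine ⟨⟨Real.cos_pi_div_two, by positivity⟩, fun t ht => ?_⟩
  by_contra! hlt
  exact (Real.cos_pos_of_mem_Ioo ⟨by linarith [ht.2], hlt⟩).ne' ht.1

theorem deriv_const_mul_cos_ne_zero {c t : ℝ} (hc : c ≠ 0) (ht : c * Real.cos t = 0) :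
    deriv (fun t => c * Real.cos t) t ≠ 0 := by
  have hcos : Real.cos t = 0 := (mul_eq_zero.1 ht).resolve_left hc
  have hsin : Real.sin t ≠ 0 := fun hsin => by
    simpa [hcos, hsin] using Real.sin_sq_add_cos_sq t
  simpa using ⟨hc, hsin⟩

end Enumeration

/-! ### The scaling limit -/

section ScalingLimit

open Filter Topology Set

variable {ι : Type*} {l : Filter ι} {F : ι → ℝ → ℝ} {c : ℝ} {M : ι → ℕ} {y : ι → ℕ → ℝ}

theorem eventually_lt_and_tendsto_zeros_of_tendsto_cos
    (h : TendstoLocallyUniformlyC1 F (fun t => c * Real.cos t) l) (hc : c ≠ 0)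
    (hy : ∀ᶠ i in l, IsIncreasingEnum (y i) (2 * M i) {t | F i t = 0})
    (hsymm : ∀ i t, F i (-t) = 0 ↔ F i t = 0) (k : ℕ) :
    (∀ᶠ i in l, k < M i) ∧
      Tendsto (fun i => y i (M i + 1 + k)) l (𝓝 (Real.pi / 2 + k * Real.pi)) := by
  have hsimple := fun t => deriv_const_mul_cos_ne_zero hc (t := t)
  have hzero : ∀ {a b}, IsLeast {t | Real.cos t = 0 ∧ a < t} b →
      IsLeast {t | c * Real.cos t = 0 ∧ a < t} b := fun hb => by simpa [hc] using hb
  have hexists : ∀ {a b}, IsLeast {t | Real.cos t = 0 ∧ a < t} b →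
      ∀ᶠ i in l, ∃ t ∈ Ioo ((a + b) / 2) (b + 1), F i t = 0 := fun {a b} hb =>
    h.eventually_exists_zero_mem_Ioo (hzero hb).1.1 (hsimple b (hzero hb).1.1)
      (by linarith [hb.1.2]) (lt_add_one b)
  induction k with
  | zero =>
    have hM : ∀ᶠ i in l, 0 < M i := by
      filter_upwards [hy, hexists isLeast_cos_eq_zero_pos] with i hi ⟨t, _, ht⟩
      obtain ⟨j, ⟨hj, hjM⟩, -⟩ := hi.2.superset ht
      omega
    refine ⟨hM, h.tendsto_isLeast_zero hsimple tendsto_const_nhds (a := 0)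
      (fun h0 => absurd h0 (by simpa using hc)) ?_
      (by simpa using hzero isLeast_cos_eq_zero_pos)⟩
    filter_upwards [hy, hM] with i hi hMi
    exact hi.isLeast_pos (hsymm i) hMi
  | succ k ih =>
    obtain ⟨hk, hlim⟩ := ih
    have hnext : IsLeast {t | Real.cos t = 0 ∧ Real.pi / 2 + k * Real.pi < t}
        (Real.pi / 2 + (k + 1 : ℕ) * Real.pi) := by
      simpa using isLeast_cos_eq_zero_gt k
    have hM : ∀ᶠ i in l, k + 1 < M i := by
      filter_upwards [hy, hk, hexists hnext,
        hlim.eventually_lt_const (left_lt_add_div_two.2 hnext.1.2)] with i hi hki ⟨t, ht, ht0⟩ hyi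
      have hlt := hi.lt_of_apply_lt ⟨by omega, by omega⟩ ht0 (hyi.trans ht.1)
      omega
    refine ⟨hM, h.tendsto_isLeast_zero hsimple hlim (fun _ => ?_) ?_ (hzero hnext)⟩
    · filter_upwards [hy, hk] with i hi hki
      exact hi.2.subset (mem_image_of_mem _ ⟨by omega, by omega⟩)
    · filter_upwards [hy, hM] with i hi hMi
      exact hi.isLeast_gt (by omega) (by omega)

theorem tendsto_zeros_of_tendsto_cos
    (h : TendstoLocallyUniformlyC1 F (fun t => c * Real.cos t) l) (hc : c ≠ 0)
    (hy : ∀ᶠ i in l, IsIncreasingEnum (y i) (2 * M i) {t | F i t = 0})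
    (hsymm : ∀ i t, F i (-t) = 0 ↔ F i t = 0) (k : ℤ) :
    Tendsto (fun i => y i (k + M i + 1).toNat) l (𝓝 (Real.pi / 2 + k * Real.pi)) := by
  have hnat := eventually_lt_and_tendsto_zeros_of_tendsto_cos h hc hy hsymm
  rcases k with k | k
  · refine (hnat k).2.congr fun i => congrArg (y i) ?_
    simp only [Int.ofNat_eq_natCast]
    omega
  · have hlim : -(Real.pi / 2 + k * Real.pi) = Real.pi / 2 + (Int.negSucc k : ℝ) * Real.pi := by
      push_cast
      ring
    refine hlim ▸ (hnat k).2.neg.congr' ?_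
    filter_upwards [hy, (hnat k).1] with i hi hMi
    rw [← hi.apply_add_one_sub (hsymm i) ⟨by omega, by omega⟩]
    congr 1
    omega

variable {r : ℕ} {lam : Fin r → ℕ}

theorem XHermite_eq_Wron_snoc (r : ℕ) (lam : Fin r → ℕ) (n : ℕ) :
    XHermite r lam n = Wron (Fin.snoc (fun j : Fin r => physHermite (lam (Fin.rev j) + j))
      (physHermite (n + r - ∑ i, lam i)) : Fin (r + 1) → ℝ[X]) :=
  rfl

theorem eval_neg_XHermite_eq_zero_iff (r : ℕ) (lam : Fin r → ℕ) (n : ℕ) (t : ℝ) :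
    (XHermite r lam n).eval (-t) = 0 ↔ (XHermite r lam n).eval t = 0 :=
  eval_neg_Wron_eq_zero_iff
    (e := fun j => if h : (j : ℕ) < r then (-1) ^ (lam (Fin.rev ⟨(j : ℕ), h⟩) + j)
      else (-1) ^ (n + r - ∑ i, lam i))
    (fun j => by split_ifs <;> simp)
    (fun j => by split_ifs <;> exact physHermite_comp_neg_X _) t

theorem tendsto_four_mul_add_sub_div_sq (h σ : ℕ) :
    Tendsto (fun n : ℕ => 4 * ((n + h - σ : ℕ) : ℝ) / (2 * √n) ^ 2) atTop (𝓝 1) := by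
  have hlim : Tendsto (fun n : ℕ => 1 + ((h : ℝ) - σ) / n) atTop (𝓝 1) := by
    simpa using (tendsto_const_div_atTop_nhds_zero_nat ((h : ℝ) - σ)).const_add 1
  refine hlim.congr' ?_
  filter_upwards [eventually_ge_atTop (σ + 1)] with n hn
  have hn0 : (n : ℝ) ≠ 0 := Nat.cast_ne_zero.2 (by omega)
  rw [Nat.cast_sub (by omega), mul_pow, Real.sq_sqrt n.cast_nonneg]
  push_cast
  field

theorem exists_tendstoLocallyUniformlyC1_XHermite_cos (hr : Even r) (hsum : Even (∑ i, lam i))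
    (h0 : (genHermite r lam).eval 0 ≠ 0) :
    ∃ (c : ℝ) (a : ℕ → ℝ), c ≠ 0 ∧ (∀ n ≠ 0, a n ≠ 0) ∧
      TendstoLocallyUniformlyC1 (fun n t => (XHermite r lam (2 * n)).eval (t / (2 * √n)) / a n)
        (fun t => c * Real.cos t) atTop := by
  obtain ⟨h, rfl⟩ := hr.two_dvd
  obtain ⟨σ, hσ⟩ := hsum.two_dvd
  have hX : ∀ n, XHermite (2 * h) lam (2 * n) =
      Wron (Fin.snoc (fun j : Fin (2 * h) => physHermite (lam (Fin.rev j) + j))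
        (physHermite (2 * (n + h - σ))) : Fin (2 * h + 1) → ℝ[X]) := fun n => by
    rw [XHermite_eq_Wron_snoc, hσ, ← Nat.mul_add, Nat.mul_sub]
  have hs : Tendsto (fun n : ℕ => 2 * √n) atTop atTop :=
    (Real.tendsto_sqrt_atTop.comp tendsto_natCast_atTop_atTop).const_mul_atTop two_pos
  refine ⟨(genHermite (2 * h) lam).eval 0 * (-1) ^ h,
    fun n => (physHermite (2 * (n + h - σ))).eval 0 * (2 * √n) ^ (2 * h),
    mul_ne_zero h0 (by simp), fun n hn => ?_, ?_⟩
  · have hsqrt : 0 < √(n : ℝ) := Real.sqrt_pos.2 (Nat.cast_pos.2 (Nat.pos_of_ne_zero hn))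
    exact mul_ne_zero (eval_zero_physHermite_two_mul_ne_zero _)
      (pow_ne_zero _ (mul_pos two_pos hsqrt).ne')
  · simp only [hX]
    convert TendstoLocallyUniformlyC1.of_aeval (Complex.differentiable_cos.const_mul _)
      (tendstoLocallyUniformly_aeval_Wron_snoc_physHermite _ hs
        (tendsto_four_mul_add_sub_div_sq h σ)) using 2 with t
    rw [Complex.re_ofReal_mul, Complex.cos_ofReal_re, genHermite]

theorem zero_spacing_even_general (hr : Even r) (hsum : Even (∑ i, lam i))
    (h0 : (genHermite r lam).eval 0 ≠ 0) {M : ℕ → ℕ} {y : ℕ → ℕ → ℝ}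
    (hy : ∀ᶠ n in atTop,
      IsIncreasingEnum (y n) (2 * M n) {t | (XHermite r lam (2 * n)).eval t = 0})
    (k : ℤ) :
    Tendsto (fun n : ℕ => 2 * √n * y n (k + M n + 1).toNat) atTop
      (𝓝 (Real.pi / 2 + k * Real.pi)) := by
  obtain ⟨c, a, hc, ha, hlim⟩ := exists_tendstoLocallyUniformlyC1_XHermite_cos hr hsum h0
  refine tendsto_zeros_of_tendsto_cos (y := fun (n : ℕ) j => 2 * √n * y n j) hlim hc ?_
    (fun n t => ?_) k
  · filter_upwards [hy, eventually_ne_atTop 0] with n hn hn0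
    have hs : 0 < 2 * √(n : ℝ) :=
      mul_pos two_pos (Real.sqrt_pos.2 (Nat.cast_pos.2 (Nat.pos_of_ne_zero hn0)))
    simpa [ha n hn0] using hn.mul_const_pos hs
  · simp only [neg_div, div_eq_zero_iff, eval_neg_XHermite_eq_zero_iff]

end ScalingLimit

/-- Theorem 1.1(even), eq. (10): for an even partition `λ` and fixed `k ∈ ℤ`,
`lim_{n→∞} 2√n · x_{k+n+1-|λ|/2, 2n} = π/2 + kπ`, where `x_{1,m} < ⋯ < x_{m-|λ|,m}`
enumerate the real zeros of `P_m` (for `m ≥ |λ| + λ_1`). -/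
theorem zero_spacing_even
    (r : ℕ) (lam : Fin r → ℕ) (hpart : IsEvenPartition r lam)
    (x : ℕ → ℕ → ℝ)
    (hx : ∀ m : ℕ, (∀ i : Fin r, (∑ i, lam i) + lam i ≤ m) →
      StrictMonoOn (x m) (Set.Icc 1 (m - ∑ i, lam i)) ∧
      ∀ t : ℝ, (XHermite r lam m).eval t = 0 ↔
        ∃ j : ℕ, 1 ≤ j ∧ j ≤ m - (∑ i, lam i) ∧ x m j = t)
    (k : ℤ) :
    Filter.Tendsto
      (fun n : ℕ => 2 * Real.sqrt n *
        x (2 * n) (k + (n : ℤ) + 1 - ((∑ i, lam i : ℕ) : ℤ) / 2).toNat)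
      Filter.atTop (nhds (Real.pi / 2 + (k : ℝ) * Real.pi)) := by
  have hsum := hpart.even_sum
  obtain ⟨σ, hσ⟩ := hsum.two_dvd
  have henum : ∀ᶠ n in Filter.atTop, IsIncreasingEnum (x (2 * n)) (2 * (n - σ))
      {t | (XHermite r lam (2 * n)).eval t = 0} := by
    filter_upwards [Filter.eventually_ge_atTop (2 * σ)] with n hn
    have hlam : ∀ i, lam i ≤ ∑ i, lam i := fun i =>
      Finset.single_le_sum (fun _ _ => Nat.zero_le _) (Finset.mem_univ i)
    obtain ⟨hmono, hzeros⟩ := hx (2 * n) fun i => by have := hlam i; omega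
    rw [show 2 * (n - σ) = 2 * n - ∑ i, lam i by omega]
    exact ⟨hmono, Set.ext fun t => by simp [hzeros, and_assoc]⟩
  refine (zero_spacing_even_general hpart.2.1 hsum hpart.eval_zero_genHermite_ne_zero
    henum k).congr' ?_
  filter_upwards [Filter.eventually_ge_atTop σ] with n hn
  rw [hσ]
  congr 2
  omega
end

section
/- Let λ be a partition of length r and let n ∈ N_λ. Then the meromorphic function x ↦ P_n(x)² e^{−x²} / H_λ(x)² on ℂ has vanishing residue at every zero of H_λ. Concretely: for every zero z₀ of H_λ and for every sufficiently small ε > 0 (so small that z₀ is the only zero of H_λ in the closed disk of radius ε around z₀), the contour integral of P_n(x)² e^{−x²} / H_λ(x)² over the circle |x − z₀| = ε equals 0. -/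
open Polynomial

/-!
Let `L = D² - 2 x D` be the Hermite operator, `f_1, …, f_r` Hermite polynomials with Wronskian `W`,
and `A y = Wr[f, y] / W`, a monic differential operator of order `r` with kernel spanned by the
`f_j`. Since the `f_j` are eigenfunctions, `L` preserves the kernel of `A`, and division by `A`
gives `A L = L' A` with `L' = D² - 2 x D + c` (Crum's theorem).

If `L g = ν g` and `L e = ν e - g`, then `G = A g` and `E = A e` satisfy the same equations for
`L'`, so Abel's identity gives `(e^{-x²} (G' E - G E'))' = e^{-x²} G²`. For `g = H_m`, which is
`(2 x - D)^m 1`, one may take `e = (2 x - D)^m e₀`, where `e₀` is an entire solution of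
`L e₀ = -1`. The integrand thus has a single-valued primitive away from the zeros of `W`.
-/

section DifferentialOperators

variable {k R : Type*} [CommRing k] [CommRing R] [Algebra k R] (D : Derivation k R R)

local notation "∂" => (Derivation.toLinearMap D : Module.End k R)

/-- The differential operators of order `< n`, as an `R`-submodule of `Module.End k R`. The strict
bound makes the monic operators of order `r` those `A` with `A - D ^ r ∈ diffOpsLT D r`. -/
def diffOpsLT (n : ℕ) : Submodule R (Module.End k R) :=
  Submodule.span R (Set.range fun i : Fin n => ∂ ^ (i : ℕ))

/-- The second-order operator `D² + p D + q`. -/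
def monicSecondOrder (p q : R) : Module.End k R :=
  ∂ ^ 2 + p • ∂ + q • 1

/-- The Wronskian determinant of a finite family in a differential ring. -/
def wronskianDet {n : ℕ} (f : Fin n → R) : R :=
  (Matrix.of fun i j : Fin n => (∂ ^ (i : ℕ)) (f j)).det

variable {D} {n r : ℕ} {T A : Module.End k R}

theorem mem_diffOpsLT_iff :
    T ∈ diffOpsLT D n ↔ ∃ c : Fin n → R, ∑ i, c i • ∂ ^ (i : ℕ) = T :=
  Submodule.mem_span_range_iff_exists_fun R

theorem pow_mem_diffOpsLT {i : ℕ} (hi : i < n) : ∂ ^ i ∈ diffOpsLT D n :=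
  Submodule.subset_span ⟨⟨i, hi⟩, rfl⟩

theorem diffOpsLT_mono {m : ℕ} (h : m ≤ n) : diffOpsLT D m ≤ diffOpsLT D n :=
  Submodule.span_le.2 <| Set.range_subset_iff.2 fun i => pow_mem_diffOpsLT (i.2.trans_le h)

theorem deriv_mul_smul (a : R) (T : Module.End k R) : ∂ * a • T = a • (∂ * T) + D a • T := by
  ext y
  simp [mul_comm]

theorem mul_deriv_mem_diffOpsLT (hT : T ∈ diffOpsLT D n) : T * ∂ ∈ diffOpsLT D (n + 1) := by
  induction hT using Submodule.span_induction with
  | mem T hT =>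
    obtain ⟨i, rfl⟩ := hT
    exact pow_succ ∂ (i : ℕ) ▸ pow_mem_diffOpsLT (Nat.succ_lt_succ i.2)
  | zero => simp
  | add S T _ _ hS hT => exact add_mul S T ∂ ▸ add_mem hS hT
  | smul a T _ hT => exact smul_mul_assoc a T ∂ ▸ Submodule.smul_mem _ a hT

theorem lie_deriv_mem_diffOpsLT (hT : T ∈ diffOpsLT D n) : ∂ * T - T * ∂ ∈ diffOpsLT D n := by
  obtain ⟨c, rfl⟩ := mem_diffOpsLT_iff.1 hT
  rw [Finset.mul_sum, Finset.sum_mul, ← Finset.sum_sub_distrib]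
  refine sum_mem fun i _ => ?_
  rw [deriv_mul_smul, smul_mul_assoc, ← pow_succ, ← pow_succ', add_sub_cancel_left]
  exact Submodule.smul_mem _ _ (pow_mem_diffOpsLT i.2)

theorem deriv_mul_mem_diffOpsLT (hT : T ∈ diffOpsLT D n) : ∂ * T ∈ diffOpsLT D (n + 1) := by
  simpa using add_mem (diffOpsLT_mono n.le_succ (lie_deriv_mem_diffOpsLT hT))
    (mul_deriv_mem_diffOpsLT hT)

theorem deriv_pow_lie_smul_mem_diffOpsLT (a : R) (i : ℕ) :
    ∂ ^ i * a • 1 - a • ∂ ^ i ∈ diffOpsLT D i := by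
  induction i with
  | zero => simp
  | succ i ih =>
    have hstep : ∂ ^ (i + 1) * a • (1 : Module.End k R) - a • ∂ ^ (i + 1) =
        ∂ * (∂ ^ i * a • 1 - a • ∂ ^ i) + D a • ∂ ^ i := by
      rw [mul_sub, deriv_mul_smul, pow_succ', mul_assoc]
      abel
    rw [hstep]
    exact add_mem (deriv_mul_mem_diffOpsLT ih)
      (Submodule.smul_mem _ _ (pow_mem_diffOpsLT i.lt_succ_self))

theorem lie_smul_mem_diffOpsLT (a : R) (hT : T ∈ diffOpsLT D (n + 1)) :
    T * a • 1 - a • T ∈ diffOpsLT D n := by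
  obtain ⟨c, rfl⟩ := mem_diffOpsLT_iff.1 hT
  rw [Finset.sum_mul, Finset.smul_sum, ← Finset.sum_sub_distrib]
  refine sum_mem fun i _ => ?_
  have hterm : (c i • ∂ ^ (i : ℕ)) * a • 1 - a • c i • ∂ ^ (i : ℕ) =
      c i • (∂ ^ (i : ℕ) * a • 1 - a • ∂ ^ (i : ℕ)) := by
    rw [smul_mul_assoc, smul_comm a, smul_sub]
  rw [hterm]
  exact Submodule.smul_mem _ _ <|
    diffOpsLT_mono (Nat.lt_succ_iff.1 i.2) (deriv_pow_lie_smul_mem_diffOpsLT a i)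

theorem mul_sub_monicSecondOrder_mul_mem_diffOpsLT (hA : A - ∂ ^ r ∈ diffOpsLT D r) (p q : R) :
    A * monicSecondOrder D p q - monicSecondOrder D p 0 * A ∈ diffOpsLT D (r + 1) := by
  have hA_mem : A ∈ diffOpsLT D (r + 1) := by
    simpa using add_mem (diffOpsLT_mono r.le_succ hA) (pow_mem_diffOpsLT r.lt_succ_self)
  have hlie_deriv : ∂ * A - A * ∂ ∈ diffOpsLT D r := by
    simpa [mul_sub, sub_mul, ← pow_succ, ← pow_succ'] using lie_deriv_mem_diffOpsLT hA
  have hlie_p : A * p • 1 - p • A ∈ diffOpsLT D r := lie_smul_mem_diffOpsLT p hA_mem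
  have hA_q : A * q • 1 ∈ diffOpsLT D (r + 1) := by
    simpa using add_mem (diffOpsLT_mono r.le_succ (lie_smul_mem_diffOpsLT q hA_mem))
      (Submodule.smul_mem _ q hA_mem)
  have hdecomp : A * monicSecondOrder D p q - monicSecondOrder D p 0 * A =
      (A * p • 1 - p • A) * ∂ + A * q • 1 -
        (∂ * (∂ * A - A * ∂) + (∂ * A - A * ∂) * ∂ + p • (∂ * A - A * ∂)) := by
    have hp : A * p • 1 * ∂ = A * p • ∂ := by rw [mul_assoc, smul_mul_assoc, one_mul]
    simp only [monicSecondOrder, mul_add, add_mul, sub_mul, hp, mul_sub, smul_sub, zero_smul,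
      add_zero, smul_mul_assoc, mul_assoc, pow_two]
    abel
  rw [hdecomp]
  refine sub_mem (add_mem (mul_deriv_mem_diffOpsLT hlie_p) hA_q) (add_mem (add_mem ?_ ?_) ?_)
  · exact deriv_mul_mem_diffOpsLT hlie_deriv
  · exact mul_deriv_mem_diffOpsLT hlie_deriv
  · exact diffOpsLT_mono r.le_succ (Submodule.smul_mem _ p hlie_deriv)

theorem eq_zero_of_mem_diffOpsLT_of_apply_eq_zero {f : Fin r → R} (hf : IsUnit (wronskianDet D f))
    (hT : T ∈ diffOpsLT D r) (hTf : ∀ j, T (f j) = 0) : T = 0 := by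
  obtain ⟨c, rfl⟩ := mem_diffOpsLT_iff.1 hT
  have hc : c = 0 := by
    refine Matrix.vecMul_injective_of_isUnit ((Matrix.isUnit_iff_isUnit_det _).2 hf) ?_
    ext j
    simpa [Matrix.vecMul, dotProduct] using hTf j
  simp [hc]

theorem exists_intertwining {f : Fin r → R} (hf : IsUnit (wronskianDet D f))
    (hA : A - ∂ ^ r ∈ diffOpsLT D r) (hAf : ∀ j, A (f j) = 0) {p q : R}
    (hL : ∀ j, A (monicSecondOrder D p q (f j)) = 0) :
    ∃ c, A * monicSecondOrder D p q = monicSecondOrder D p c * A := by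
  obtain ⟨b, hb⟩ := mem_diffOpsLT_iff.1 (mul_sub_monicSecondOrder_mul_mem_diffOpsLT hA p q)
  rw [Fin.sum_univ_castSucc] at hb
  simp only [Fin.val_castSucc, Fin.val_last] at hb
  set c := b (Fin.last r)
  refine ⟨c, sub_eq_zero.1 <| eq_zero_of_mem_diffOpsLT_of_apply_eq_zero hf ?_ fun j => ?_⟩
  · have hdiff : A * monicSecondOrder D p q - monicSecondOrder D p c * A =
        ∑ i : Fin r, b i.castSucc • ∂ ^ (i : ℕ) - c • (A - ∂ ^ r) := by
      have hc : monicSecondOrder D p c = monicSecondOrder D p 0 + c • 1 := by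
        simp [monicSecondOrder]
      rw [hc, add_mul, smul_mul_assoc, one_mul, ← sub_sub, ← hb, smul_sub]
      abel
    rw [hdiff]
    exact sub_mem (mem_diffOpsLT_iff.2 ⟨_, rfl⟩) (Submodule.smul_mem _ c hA)
  · simp [hAf, hL]

theorem exists_monic_wronskianDet_snoc {f : Fin r → R} (hf : IsUnit (wronskianDet D f)) :
    ∃ A : Module.End k R, A - ∂ ^ r ∈ diffOpsLT D r ∧
      ∀ y, wronskianDet D (Fin.snoc f y : Fin (r + 1) → R) = wronskianDet D f * A y := by
  obtain ⟨u, hu⟩ := hf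
  let c : Fin (r + 1) → R := fun i => (-1) ^ (i + r : ℕ) *
    (Matrix.of fun a j : Fin r => (∂ ^ (i.succAbove a : ℕ)) (f j)).det
  have hc_last : c (Fin.last r) = u := by
    simp [c, hu, wronskianDet, ← two_mul]
  have hwr (y : R) : wronskianDet D (Fin.snoc f y : Fin (r + 1) → R) =
      ∑ i, c i * (∂ ^ (i : ℕ)) y := by
    rw [wronskianDet, Matrix.det_succ_column _ (Fin.last r)]
    refine Finset.sum_congr rfl fun i _ => ?_
    simp only [Matrix.submatrix, Matrix.of_apply, Fin.snoc_last, Fin.succAbove_last,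
      Fin.snoc_castSucc, Fin.val_last, c]
    ring
  refine ⟨(↑u⁻¹ : R) • ∑ i, c i • ∂ ^ (i : ℕ), ?_, fun y => ?_⟩
  · rw [Fin.sum_univ_castSucc, hc_last, smul_add, Fin.val_last, smul_smul, Units.inv_mul, one_smul,
      add_sub_cancel_right]
    exact Submodule.smul_mem _ _ (mem_diffOpsLT_iff.2 ⟨_, rfl⟩)
  · simp [hwr, ← hu]

theorem wronskianDet_snoc_self (f : Fin r → R) (j : Fin r) :
    wronskianDet D (Fin.snoc f (f j) : Fin (r + 1) → R) = 0 :=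
  Matrix.det_zero_of_column_eq (Fin.castSucc_lt_last j).ne (by simp)

theorem deriv_wronskian_pair {p c : R} {ν : k} {g e : R}
    (hg : monicSecondOrder D p c g = ν • g) (he : monicSecondOrder D p c e = ν • e - g) :
    D (g * D e - D g * e) = -p * (g * D e - D g * e) - g ^ 2 := by
  simp only [monicSecondOrder, LinearMap.add_apply, LinearMap.smul_apply, pow_two,
    Module.End.mul_apply, Derivation.coeFn_coe, Module.End.one_apply,
    smul_eq_mul, Algebra.smul_def] at hg he
  simp only [map_sub, Derivation.leibniz, smul_eq_mul]
  linear_combination g * he - e * hg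

theorem exists_primitive_wronskianDet_sq {f : Fin r → R} (hf : IsUnit (wronskianDet D f))
    {p q w : R} (hw : D w = p * w)
    {μ : Fin r → k} (hLf : ∀ j, monicSecondOrder D p q (f j) = μ j • f j)
    {ν : k} {g e : R} (hg : monicSecondOrder D p q g = ν • g)
    (he : monicSecondOrder D p q e = ν • e - g) :
    ∃ F, wronskianDet D f ^ 2 * D F = wronskianDet D (Fin.snoc f g : Fin (r + 1) → R) ^ 2 * w := by
  obtain ⟨A, hA, hwr⟩ := exists_monic_wronskianDet_snoc hf
  have hAf (j : Fin r) : A (f j) = 0 := by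
    rw [← hf.mul_right_eq_zero, ← hwr, wronskianDet_snoc_self]
  obtain ⟨c, hc⟩ := exists_intertwining hf hA hAf (p := p) (q := q) fun j => by
    rw [hLf, map_smul, hAf, smul_zero]
  have hAg : monicSecondOrder D p c (A g) = ν • A g := by
    rw [← Module.End.mul_apply, ← hc, Module.End.mul_apply, hg, map_smul]
  have hAe : monicSecondOrder D p c (A e) = ν • A e - A g := by
    rw [← Module.End.mul_apply, ← hc, Module.End.mul_apply, he, map_sub, map_smul]
  refine ⟨-(w * (A g * D (A e) - D (A g) * A e)), ?_⟩
  rw [hwr, map_neg, Derivation.leibniz, deriv_wronskian_pair hAg hAe, hw, smul_eq_mul, smul_eq_mul]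
  ring

end DifferentialOperators

section HermiteOperators

variable {k R : Type*} [CommRing k] [CommRing R] [Algebra k R]

/-- The Hermite operator `D² - 2 x D`, whose eigenfunction for `-2 m` is `H_m` if `D x = 1`. -/
def hermiteOp (D : Derivation k R R) (x : R) : Module.End k R :=
  monicSecondOrder D (-2 * x) 0

/-- The operator `2 x - D` raising the degree of Hermite polynomials by one. -/
def hermiteRaising (D : Derivation k R R) (x : R) : Module.End k R :=
  (2 * x) • 1 - D.toLinearMap

theorem hermiteOp_hermiteRaising {D : Derivation k R R} {x : R} (hx : D x = 1) (y : R) :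
    hermiteOp D x (hermiteRaising D x y) =
      hermiteRaising D x (hermiteOp D x y) - 2 * hermiteRaising D x y := by
  have htwo : D 2 = 0 := D.map_natCast 2
  simp only [hermiteOp, monicSecondOrder, pow_two, neg_mul, zero_smul, add_zero, hermiteRaising,
    LinearMap.sub_apply, LinearMap.smul_apply, Module.End.one_apply, smul_eq_mul,
    Derivation.coeFn_coe, LinearMap.add_apply, Module.End.mul_apply, map_sub, Derivation.leibniz,
    hx, mul_one, htwo, mul_zero, map_add, zero_add, map_neg]
  ring

theorem hermiteOp_hermiteRaising_pow {D : Derivation k R R} {x : R} (hx : D x = 1) (m : ℕ)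
    (y : R) :
    hermiteOp D x ((hermiteRaising D x ^ m) y) =
      (hermiteRaising D x ^ m) (hermiteOp D x y) - (2 * m : k) • (hermiteRaising D x ^ m) y := by
  induction m with
  | zero => simp
  | succ m ih =>
    simp only [pow_succ', Module.End.mul_apply, hermiteOp_hermiteRaising hx, ih, map_sub, map_smul]
    simp only [Algebra.smul_def, map_mul, map_ofNat, map_natCast]
    push_cast
    ring

end HermiteOperators

/-- The Wronskian `Wr[H_{d 0}, …, H_{d (r - 1)}]` of Hermite polynomials of arbitrary degrees. -/
noncomputable def hermiteWronskian {r : ℕ} (d : Fin r → ℕ) : ℝ[X] :=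
  Wron fun j => physHermite (d j)

theorem genHermite_eq_hermiteWronskian (r : ℕ) (lam : Fin r → ℕ) :
    genHermite r lam = hermiteWronskian fun j => lam (Fin.rev j) + j :=
  rfl

theorem XHermite_eq_hermiteWronskian_snoc (r : ℕ) (lam : Fin r → ℕ) (n : ℕ) :
    XHermite r lam n = hermiteWronskian
      (Fin.snoc (fun j => lam (Fin.rev j) + j) (n + r - ∑ i, lam i) : Fin (r + 1) → ℕ) := by
  refine congrArg Wron (funext fun j => ?_)
  cases j using Fin.lastCases <;> simp

section HermiteWronskians

variable {R : Type*} [CommRing R] [Algebra ℝ R] {D : Derivation ℝ R R} {x : R}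

theorem deriv_pow_aeval (hx : D x = 1) (i : ℕ) (p : ℝ[X]) :
    (D.toLinearMap ^ i) (aeval x p) = aeval x ((fun q => derivative q)^[i] p) := by
  induction i with
  | zero => rfl
  | succ i ih =>
    rw [pow_succ', Module.End.mul_apply, ih, Function.iterate_succ_apply']
    simp [hx]

theorem aeval_Wron (hx : D x = 1) {n : ℕ} (f : Fin n → ℝ[X]) :
    aeval x (Wron f) = wronskianDet D fun j => aeval x (f j) := by
  simp only [wronskianDet, deriv_pow_aeval hx]
  exact AlgHom.map_det _ _

theorem aeval_physHermite (hx : D x = 1) (m : ℕ) :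
    aeval x (physHermite m) = (hermiteRaising D x ^ m) 1 := by
  induction m with
  | zero => simp [physHermite]
  | succ m ih =>
    rw [pow_succ', Module.End.mul_apply, ← ih]
    simp [physHermite, hermiteRaising, hx, map_ofNat]

theorem exists_primitive_hermiteWronskian (hx : D x = 1) {w e₀ : R} (hw : D w = -2 * x * w)
    (he₀ : hermiteOp D x e₀ = -1) {r : ℕ} (d : Fin r → ℕ) (m : ℕ)
    (hd : IsUnit (aeval x (hermiteWronskian d))) :
    ∃ F, aeval x (hermiteWronskian d) ^ 2 * D F =
      aeval x (hermiteWronskian (Fin.snoc d m : Fin (r + 1) → ℕ)) ^ 2 * w := by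
  have hone : hermiteOp D x 1 = 0 := by simp [hermiteOp, monicSecondOrder, pow_two]
  have heigen (i : ℕ) : hermiteOp D x (aeval x (physHermite i)) =
      (-(2 * i) : ℝ) • aeval x (physHermite i) := by
    rw [aeval_physHermite hx, hermiteOp_hermiteRaising_pow hx, hone, map_zero, zero_sub, neg_smul]
  have hgeneralized : hermiteOp D x ((hermiteRaising D x ^ m) e₀) =
      (-(2 * m) : ℝ) • (hermiteRaising D x ^ m) e₀ - aeval x (physHermite m) := by
    rw [hermiteOp_hermiteRaising_pow hx, he₀, map_neg, aeval_physHermite hx, neg_smul]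
    abel
  have hsnoc : (fun j => aeval x (physHermite ((Fin.snoc d m : Fin (r + 1) → ℕ) j))) =
      Fin.snoc (fun j => aeval x (physHermite (d j))) (aeval x (physHermite m)) :=
    Fin.comp_snoc (fun i => aeval x (physHermite i)) d m
  rw [hermiteWronskian, aeval_Wron hx] at hd
  rw [hermiteWronskian, hermiteWronskian, aeval_Wron hx, aeval_Wron hx, hsnoc]
  exact exists_primitive_wronskianDet_sq hd hw (fun j => heigen (d j)) (heigen m) hgeneralized

end HermiteWronskians

section HolomorphicFunctions

open TopologicalSpace

/-- Extension by zero to `ℂ`, so that `deriv` applies to functions on `U`; only the values on `U`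
matter when `U` is open. -/
noncomputable def zeroExtend {U : Set ℂ} (F : U → ℂ) : ℂ → ℂ :=
  Function.extend Subtype.val F 0

theorem zeroExtend_coe {U : Set ℂ} (F : U → ℂ) (z : U) : zeroExtend F z = F z :=
  Subtype.val_injective.extend_apply F 0 z

theorem zeroExtend_add {U : Set ℂ} (F G : U → ℂ) :
    zeroExtend (F + G) = zeroExtend F + zeroExtend G := by
  simpa only [zeroExtend, add_zero] using
    Function.extend_add Subtype.val F G (0 : ℂ → ℂ) 0

theorem zeroExtend_mul {U : Set ℂ} (F G : U → ℂ) :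
    zeroExtend (F * G) = zeroExtend F * zeroExtend G := by
  simpa only [zeroExtend, mul_zero] using
    Function.extend_mul Subtype.val F G (0 : ℂ → ℂ) 0

theorem zeroExtend_smul {U : Set ℂ} (c : ℂ) (F : U → ℂ) :
    zeroExtend (c • F) = c • zeroExtend F := by
  simpa only [zeroExtend, smul_zero] using Function.extend_smul c Subtype.val F (0 : ℂ → ℂ)

theorem zeroExtend_restrict_eqOn {U : Set ℂ} (G : ℂ → ℂ) :
    Set.EqOn (zeroExtend fun z : U => G z) G U :=
  fun z hz => zeroExtend_coe _ (⟨z, hz⟩ : U)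

variable (U : Opens ℂ)

/-- The algebra of holomorphic functions on the open set `U`. -/
def holomorphicFunctions : Subalgebra ℂ (U → ℂ) where
  carrier := {F | DifferentiableOn ℂ (zeroExtend F) U}
  mul_mem' {F G} hF hG := by
    rw [Set.mem_ofPred_eq, zeroExtend_mul]
    exact hF.mul hG
  add_mem' {F G} hF hG := by
    rw [Set.mem_ofPred_eq, zeroExtend_add]
    exact hF.add hG
  algebraMap_mem' c := (differentiableOn_const c).congr (zeroExtend_restrict_eqOn fun _ => c)

variable {U}

namespace holomorphicFunctions

theorem differentiableAt_zeroExtend (F : holomorphicFunctions U) (z : U) :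
    DifferentiableAt ℂ (zeroExtend F.1) z :=
  F.2.differentiableAt (U.isOpen.mem_nhds z.2)

theorem deriv_zeroExtend_restrict (G : ℂ → ℂ) (z : U) :
    deriv (zeroExtend fun w : U => G w) z = deriv G z :=
  ((zeroExtend_restrict_eqOn G).eventuallyEq_of_mem (U.isOpen.mem_nhds z.2)).deriv_eq

variable (U) in
/-- Complex differentiation of holomorphic functions on `U`. -/
noncomputable def derivation : Derivation ℂ (holomorphicFunctions U) (holomorphicFunctions U) :=
  Derivation.mk'
    { toFun F := ⟨fun z => deriv (zeroExtend F.1) z,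
        (F.2.deriv U.isOpen).congr (zeroExtend_restrict_eqOn (deriv (zeroExtend F.1)))⟩
      map_add' F G := by
        ext z
        change deriv (zeroExtend (F.1 + G.1)) z = _
        rw [zeroExtend_add]
        exact deriv_add (differentiableAt_zeroExtend F z) (differentiableAt_zeroExtend G z)
      map_smul' c F := by
        ext z
        change deriv (zeroExtend (c • F.1)) z = _
        rw [zeroExtend_smul]
        exact deriv_const_smul c (differentiableAt_zeroExtend F z) }
    fun F G => by
      ext z
      change deriv (zeroExtend (F.1 * G.1)) z =
        F.1 z * deriv (zeroExtend G.1) z + G.1 z * deriv (zeroExtend F.1) z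
      rw [zeroExtend_mul, deriv_mul (differentiableAt_zeroExtend F z)
        (differentiableAt_zeroExtend G z), zeroExtend_coe, zeroExtend_coe]
      ring

theorem hasDerivAt_zeroExtend (F : holomorphicFunctions U) (z : U) :
    HasDerivAt (zeroExtend F.1) ((derivation U F).1 z) z :=
  (differentiableAt_zeroExtend F z).hasDerivAt

variable (U) in
/-- The restriction to `U` of an entire function. -/
def restrict (G : ℂ → ℂ) (hG : Differentiable ℂ G) : holomorphicFunctions U :=
  ⟨fun z => G z, hG.differentiableOn.congr (zeroExtend_restrict_eqOn G)⟩

theorem derivation_restrict {G : ℂ → ℂ} (hG : Differentiable ℂ G) :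
    derivation U (restrict U G hG) = restrict U (deriv G) hG.deriv := by
  ext z
  exact deriv_zeroExtend_restrict G z

variable (U) in
/-- The coordinate function on `U`, the variable of polynomials regarded as functions on `U`. -/
def coord : holomorphicFunctions U :=
  restrict U id differentiable_id

theorem derivation_coord : derivation U (coord U) = 1 := by
  ext z
  exact (deriv_zeroExtend_restrict id z).trans (deriv_id _)

theorem isUnit_of_forall_ne_zero {F : holomorphicFunctions U} (hF : ∀ z, F.1 z ≠ 0) :
    IsUnit F := by
  have hinv : DifferentiableOn ℂ (fun z => (zeroExtend F.1 z)⁻¹) U :=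
    F.2.inv fun z hz => (zeroExtend_coe F.1 ⟨z, hz⟩).symm ▸ hF ⟨z, hz⟩
  refine IsUnit.of_mul_eq_one
    ⟨fun z => (zeroExtend F.1 z)⁻¹,
      hinv.congr (zeroExtend_restrict_eqOn fun z => (zeroExtend F.1 z)⁻¹)⟩ ?_
  ext z
  change F.1 z * (zeroExtend F.1 z)⁻¹ = 1
  rw [zeroExtend_coe, mul_inv_cancel₀ (hF z)]

theorem aeval_coord_apply (p : ℝ[X]) (z : U) : (aeval (coord U) p).1 z = aeval (z : ℂ) p :=
  let evalAt : holomorphicFunctions U →ₐ[ℂ] ℂ := (Pi.evalAlgHom ℂ _ z).comp (Subalgebra.val _)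
  (aeval_algHom_apply (evalAt.restrictScalars ℝ) (coord U) p).symm

end holomorphicFunctions

theorem hasDerivAt_exp_neg_sq (z : ℂ) :
    HasDerivAt (fun z => Complex.exp (-z ^ 2)) (-2 * z * Complex.exp (-z ^ 2)) z := by
  convert! (hasDerivAt_pow 2 z).neg.cexp using 1
  simp only [neg_mul, Pi.neg_apply, Nat.cast_ofNat, Nat.add_one_sub_one, pow_one, mul_neg, neg_inj]
  ring

theorem exists_differentiable_hermite_eq_neg_one : ∃ e : ℂ → ℂ, Differentiable ℂ e ∧
    ∀ z, deriv (deriv e) z - 2 * z * deriv e z = -1 := by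
  have hgauss : Differentiable ℂ fun z : ℂ => Complex.exp (-z ^ 2) := by fun_prop
  obtain ⟨E, hE⟩ : ∃ E : ℂ → ℂ, ∀ z, HasDerivAt E (Complex.exp (-z ^ 2)) z := by
    simpa [Complex.IsExactOn] using hgauss.isExactOn_univ
  let b : ℂ → ℂ := fun z => -(Complex.exp (z ^ 2) * E z)
  have hb (z : ℂ) : HasDerivAt b (2 * z * b z - 1) z := by
    convert! (((hasDerivAt_pow 2 z).cexp).mul (hE z)).neg using 1
    rw [← Complex.exp_add]
    simp only [mul_neg, Nat.cast_ofNat, Nat.add_one_sub_one, pow_one, add_neg_cancel,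
      Complex.exp_zero, neg_add_rev, b]
    ring
  have hb_diff : Differentiable ℂ b := fun z => (hb z).differentiableAt
  obtain ⟨e, he⟩ : ∃ e : ℂ → ℂ, ∀ z, HasDerivAt e (b z) z := by
    simpa [Complex.IsExactOn] using hb_diff.isExactOn_univ
  refine ⟨e, fun z => (he z).differentiableAt, fun z => ?_⟩
  rw [funext fun w => (he w).deriv, (hb z).deriv]
  ring

namespace holomorphicFunctions

theorem exists_hermiteOp_eq_neg_one (U : Opens ℂ) :
    ∃ e₀, hermiteOp ((derivation U).restrictScalars ℝ) (coord U) e₀ = -1 := by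
  obtain ⟨e, he, heq⟩ := exists_differentiable_hermite_eq_neg_one
  refine ⟨restrict U e he, ?_⟩
  simp only [hermiteOp, monicSecondOrder, pow_two, zero_smul, add_zero, LinearMap.add_apply,
    Module.End.mul_apply, Derivation.coeFn_coe, Derivation.restrictScalars_apply,
    derivation_restrict, LinearMap.smul_apply, smul_eq_mul]
  ext z
  change deriv (deriv e) z + -2 * z * deriv e z = -1
  linear_combination heq z

end holomorphicFunctions

open holomorphicFunctions in
theorem exists_hasDerivAt_hermiteWronskian {r : ℕ} (d : Fin r → ℕ) (m : ℕ) :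
    ∃ F : ℂ → ℂ, ∀ z, aeval z (hermiteWronskian d) ≠ 0 →
      HasDerivAt F
        (aeval z (hermiteWronskian (Fin.snoc d m : Fin (r + 1) → ℕ)) ^ 2 *
          Complex.exp (-z ^ 2) / aeval z (hermiteWronskian d) ^ 2) z := by
  let U : Opens ℂ := ⟨{z | aeval z (hermiteWronskian d) ≠ 0},
    isOpen_ne_fun (hermiteWronskian d).continuous_aeval continuous_const⟩
  let w : holomorphicFunctions U := restrict U (fun z => Complex.exp (-z ^ 2)) (by fun_prop)
  have hw : derivation U w = -2 * coord U * w := by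
    ext z
    exact (deriv_zeroExtend_restrict _ z).trans (hasDerivAt_exp_neg_sq z).deriv
  have hd : IsUnit (aeval (coord U) (hermiteWronskian d)) := isUnit_of_forall_ne_zero fun z => by
    rw [aeval_coord_apply]
    exact z.2
  obtain ⟨e₀, he₀⟩ := exists_hermiteOp_eq_neg_one U
  obtain ⟨F, hF⟩ := exists_primitive_hermiteWronskian derivation_coord hw he₀ d m hd
  refine ⟨zeroExtend F.1, fun z hz => ?_⟩
  convert! hasDerivAt_zeroExtend F ⟨z, hz⟩ using 1
  rw [div_eq_iff (pow_ne_zero 2 hz), mul_comm _ (_ ^ 2)]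
  have hFz := congrFun (congrArg Subtype.val hF) ⟨z, hz⟩
  simpa [aeval_coord_apply, w, restrict] using hFz.symm

end HolomorphicFunctions

theorem residues_vanish_general {r : ℕ} (d : Fin r → ℕ) (m : ℕ) {c : ℂ} {R : ℝ} (hR : 0 ≤ R)
    (hne : ∀ z ∈ Metric.sphere c R, aeval z (hermiteWronskian d) ≠ 0) :
    (∮ z in C(c, R),
      aeval z (hermiteWronskian (Fin.snoc d m : Fin (r + 1) → ℕ)) ^ 2 * Complex.exp (-z ^ 2) /
        aeval z (hermiteWronskian d) ^ 2) = 0 := by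
  obtain ⟨F, hF⟩ := exists_hasDerivAt_hermiteWronskian d m
  exact circleIntegral.integral_eq_zero_of_hasDerivWithinAt hR fun z hz =>
    (hF z (hne z hz)).hasDerivWithinAt

/-- Proposition 5.1: the meromorphic function `x ↦ P_n(x)² e^{-x²} / H_λ(x)²` has
vanishing residues at each of its poles (the zeros of `H_λ`): the contour integral
over a small circle around any zero `z₀` of `H_λ` vanishes. -/
theorem residues_vanish
    (r : ℕ) (lam : Fin r → ℕ) (hpart : IsPartition r lam)
    (n : ℕ) (hn : XDegSeq r lam n)
    (z₀ : ℂ) (hz : Polynomial.aeval z₀ (genHermite r lam) = 0)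
    (ε : ℝ) (hε : 0 < ε)
    (honly : ∀ w : ℂ, Polynomial.aeval w (genHermite r lam) = 0 →
      w ∈ Metric.closedBall z₀ ε → w = z₀) :
    (∮ z in C(z₀, ε),
      (Polynomial.aeval z (XHermite r lam n)) ^ 2 * Complex.exp (-z ^ 2) /
        (Polynomial.aeval z (genHermite r lam)) ^ 2) = 0 := by
  simp only [XHermite_eq_hermiteWronskian_snoc, genHermite_eq_hermiteWronskian] at honly ⊢
  exact residues_vanish_general _ _ hε.le fun z hz hz' =>
    Metric.ne_of_mem_sphere hz hε.ne' (honly z hz' (Metric.sphere_subset_closedBall hz))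
end
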